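/- arXiv:2206.10874 — 2 statements merged into one kernel-verified Lean document; each statement's English description precedes it below -/
import Mathlib

section
/- Let 𝓛 be a quite full lamination system that is loose and totally disconnected. Then for any three pairwise distinct leaves ℓ₁, ℓ₂, ℓ₃ of 𝓛, the intersection v(ℓ₁) ∩ v(ℓ₂) ∩ v(ℓ₃) of their vertex sets is empty. -/
/-!
Suppose three distinct leaves share the vertex `x`. Cutting the circle open at `x` turns it into
`[0, 1)`, and the leaves become `(0, a)`, `(0, b)`, `(0, c)` with `a < b < c`. The set `Y` of all
`t` such that `(0, t)` is in the lamination is closed in `(0, 1)`, since `𝓛` is closed under unions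
of chains (`Lam.of_chain`).

Total disconnectedness, applied to `(0, a)` and `(b, 1)`, shows that `Y` does not contain the whole
interval between `a` and `b` (`exists_not_leaf`). Hence `Y` has two consecutive elements `p < q` in
`[a, b]`, and likewise `r < s` in `[b, c]` (`exists_consecutive`). For consecutive `p < q`, the
intervals `(0, p)` and `(q, 1)` together with the maximal elements of `𝓛` inside `(p, q)` form a
non-leaf gap with vertex `x` (`stripGap`, `stripGap_isGap`). The two gaps obtained in this way are
different and share the vertex `x`, which contradicts looseness.

Separation is used in the weak form of `LamSys.TotDisc`, in which the two elements `M` and `N` of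
the separating gap may coincide. Therefore the gaps with vertex `x` are constructed by hand instead
of being read off from total disconnectedness.
-/

open Set Filter Topology

namespace Veering

/-- The circle `S¹`: the unit additive circle `ℝ / ℤ`, with its standard
circular order (`sbtw x y z` means the triple `(x,y,z)` is counterclockwise)
and its standard topology. -/
abbrev S1 : Type := UnitAddCircle

/-- A good open interval in `S¹`, recorded by its ordered pair of distinct
endpoints; its carrier is the set of points strictly counterclockwise
between them. -/
structure GoodInt : Type where
  a : S1
  b : S1
  ne : a ≠ b

namespace GoodInt

/-- The set of points of the good open interval `(a, b)`. -/
def carrier (I : GoodInt) : Set S1 := {z : S1 | sbtw I.a z I.b}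

/-- The dual good interval `(u,v)* = (v,u)`. -/
def dual (I : GoodInt) : GoodInt := ⟨I.b, I.a, I.ne.symm⟩

/-- The vertex set `v(ℓ(I)) = {a, b}` of the leaf determined by `I`. -/
def verts (I : GoodInt) : Set S1 := {I.a, I.b}

end GoodInt

/-- `I` and `J` represent the same leaf `ℓ(I) = {I, I*}`. -/
def SameLeaf (I J : GoodInt) : Prop := J = I ∨ J = I.dual

/-- A lamination system: a nonempty collection of good open intervals, closed
under duals, pairwise unlinked, and closed under unions of ascending chains
(when these unions are good intervals). -/
structure LamSys : Type where
  mem : Set GoodInt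
  nonempty : mem.Nonempty
  dual_mem : ∀ I ∈ mem, GoodInt.dual I ∈ mem
  unlinked : ∀ I ∈ mem, ∀ J ∈ mem,
      I.carrier ⊆ J.carrier ∨ I.dual.carrier ⊆ J.carrier ∨
      I.carrier ⊆ J.dual.carrier ∨ I.dual.carrier ⊆ J.dual.carrier
  chain_closed : ∀ c : ℕ → GoodInt, (∀ n, c n ∈ mem) →
      (∀ n, (c n).carrier ⊆ (c (n + 1)).carrier) →
      ∀ J : GoodInt, J.carrier = ⋃ n, (c n).carrier → J ∈ mem

namespace LamSys

/-- The endpoint set `E(𝓛)`: the union of the vertex sets of all leaves. -/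
def E (L : LamSys) : Set S1 := ⋃ I ∈ L.mem, I.verts

/-- A gap of `L`: a set of pairwise disjoint elements of `L` such that every
leaf of `L` lies on one of them. -/
def IsGap (L : LamSys) (G : Set GoodInt) : Prop :=
  G ⊆ L.mem ∧
  (∀ I ∈ G, ∀ J ∈ G, I ≠ J → Disjoint I.carrier J.carrier) ∧
  (∀ I ∈ L.mem, ∃ J ∈ G, I.carrier ⊆ J.carrier ∨ I.dual.carrier ⊆ J.carrier)

end LamSys

/-- The vertex set `v(𝒢) = S¹ \ ⋃ 𝒢` of a gap. -/
def gapVerts (G : Set GoodInt) : Set S1 := (⋃ I ∈ G, I.carrier)ᶜ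

/-- `t` is a tip of `G`: an isolated point of the vertex set of `G`. -/
def IsTipOf (t : S1) (G : Set GoodInt) : Prop :=
  t ∈ gapVerts G ∧ t ∉ closure (gapVerts G \ {t})

/-- A gap that is itself a leaf `{I, I*}`. -/
def IsLeafGap (G : Set GoodInt) : Prop := ∃ I : GoodInt, G = {I, I.dual}

/-- `G` is a crown with tip sequence `t : ℤ → S¹` and pivot `p`. -/
def IsCrownWith (G : Set GoodInt) (t : ℤ → S1) (p : S1) : Prop :=
  (∀ k, p ≠ t k) ∧ (∀ k, t k ≠ t (k + 1)) ∧
  G = {I : GoodInt | ∃ k : ℤ, I.a = t k ∧ I.b = t (k + 1)} ∧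
  gapVerts G = Set.range t ∪ {p}

/-- `G` is a crown. -/
def IsCrown (G : Set GoodInt) : Prop := ∃ t p, IsCrownWith G t p

/-- `p` is the pivot of the crown `G`. -/
def IsPivotOf (p : S1) (G : Set GoodInt) : Prop := ∃ t, IsCrownWith G t p

/-- A lamination system is quite full if every gap is an ideal polygon
(finitely many vertices) or a crown. -/
def LamSys.QuiteFull (L : LamSys) : Prop :=
  ∀ G : Set GoodInt, L.IsGap G → (gapVerts G).Finite ∨ IsCrown G

/-- `p` is a rainbow point of `L`: there is a strictly descending sequence of
elements of `L` whose intersection is `{p}`. -/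
def LamSys.IsRainbowPt (L : LamSys) (p : S1) : Prop :=
  ∃ I : ℕ → GoodInt, (∀ n, I n ∈ L.mem) ∧
    (∀ n, (I (n + 1)).carrier ⊂ (I n).carrier) ∧ (⋂ n, (I n).carrier) = {p}

/-- `L` is loose: distinct non-leaf gaps have disjoint vertex sets. -/
def LamSys.Loose (L : LamSys) : Prop :=
  ∀ G H : Set GoodInt, L.IsGap G → L.IsGap H → ¬ IsLeafGap G → ¬ IsLeafGap H →
    G ≠ H → Disjoint (gapVerts G) (gapVerts H)

/-- The sequence of leaves represented by `c` converges to the good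
interval `J`. -/
def SeqConv (c : ℕ → GoodInt) (J : GoodInt) : Prop :=
  ∃ d : ℕ → GoodInt, (∀ n, SameLeaf (c n) (d n)) ∧
    J.carrier ⊆ Filter.liminf (fun n => (d n).carrier) Filter.atTop ∧
    Filter.limsup (fun n => (d n).carrier) Filter.atTop ⊆ closure J.carrier

/-- `I ∈ L` admits an `I`-side sequence: a sequence of leaves of `L`, each
distinct from `ℓ(I)` and lying on `I`, converging to `I`.  (`I` is isolated
precisely when this fails.) -/
def LamSys.HasSideSeq (L : LamSys) (I : GoodInt) : Prop :=
  ∃ c : ℕ → GoodInt, (∀ n, c n ∈ L.mem) ∧ (∀ n, ¬ SameLeaf I (c n)) ∧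
    (∀ n, (c n).carrier ⊆ I.carrier ∨ (c n).dual.carrier ⊆ I.carrier) ∧
    SeqConv c I

/-- `L` is totally disconnected: every distinct pair is separated by a
non-leaf gap. -/
def LamSys.TotDisc (L : LamSys) : Prop :=
  ∀ I ∈ L.mem, ∀ J ∈ L.mem, I.carrier ⊂ J.dual.carrier →
    ∃ G : Set GoodInt, L.IsGap G ∧ ¬ IsLeafGap G ∧
      ∃ M ∈ G, ∃ N ∈ G, I.carrier ⊆ M.carrier ∧ J.carrier ⊆ N.carrier

/-- Gaps `G1` and `G2` interleave: every element of each contains exactly one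
vertex of the other. -/
def Interleave (G1 G2 : Set GoodInt) : Prop :=
  (∀ I ∈ G1, ∃! x : S1, x ∈ I.carrier ∩ gapVerts G2) ∧
  (∀ I ∈ G2, ∃! x : S1, x ∈ I.carrier ∩ gapVerts G1)

/-- A pseudo-fibered pair: two quite full, loose, strongly transverse
lamination systems. -/
structure PseudoFibered (L1 L2 : LamSys) : Prop where
  qf1 : L1.QuiteFull
  qf2 : L2.QuiteFull
  loose1 : L1.Loose
  loose2 : L2.Loose
  transverse : L1.E ∩ L2.E = ∅

/-- A veering pair: a pseudo-fibered pair in which every non-leaf gap of one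
system admits an interleaving gap in the other. -/
structure VeeringPair (L1 L2 : LamSys) extends PseudoFibered L1 L2 : Prop where
  inter1 : ∀ G : Set GoodInt, L1.IsGap G → ¬ IsLeafGap G →
    ∃ H : Set GoodInt, L2.IsGap H ∧ Interleave G H
  inter2 : ∀ G : Set GoodInt, L2.IsGap G → ¬ IsLeafGap G →
    ∃ H : Set GoodInt, L1.IsGap H ∧ Interleave G H

/-- An orientation-preserving homeomorphism of the circle: a bijection of
`S¹` which together with its inverse is continuous, and which preserves the
counterclockwise circular order. -/
def PosHomeo (g : Equiv.Perm S1) : Prop :=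
  Continuous ⇑g ∧ Continuous ⇑g.symm ∧
  ∀ x y z : S1, sbtw x y z → sbtw (g x) (g y) (g z)

/-- `g ∈ Aut(𝓛)`: an orientation-preserving homeomorphism of `S¹` mapping each
element of `𝓛` to an element of `𝓛`. -/
def LamSys.InAut (L : LamSys) (g : Equiv.Perm S1) : Prop :=
  PosHomeo g ∧ ∀ I ∈ L.mem, ∃ J ∈ L.mem, J.carrier = ⇑g '' I.carrier

/-- `g` maps the gap `G` onto itself. -/
def MapsGapOnto (g : Equiv.Perm S1) (G : Set GoodInt) : Prop :=
  (∀ I ∈ G, ∃ J ∈ G, J.carrier = ⇑g '' I.carrier) ∧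
  (∀ J ∈ G, ∃ I ∈ G, J.carrier = ⇑g '' I.carrier)

/-- The fixed point set of `g` on `S¹`. -/
def FixSet (g : Equiv.Perm S1) : Set S1 := {x : S1 | g x = x}

/-- The set of periodic points of `g` on `S¹`. -/
def PerSet (g : Equiv.Perm S1) : Set S1 := {x : S1 | ∃ n : ℕ, 0 < n ∧ (g ^ n) x = x}

/-- `p` is an attracting fixed point of `g`. -/
def IsAttractingFix (g : Equiv.Perm S1) (p : S1) : Prop :=
  g p = p ∧ ∃ I : GoodInt, I.carrier ∩ FixSet g = {p} ∧
    ⇑g '' closure I.carrier ⊆ I.carrier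

/-- `p` is a repelling fixed point of `g`. -/
def IsRepellingFix (g : Equiv.Perm S1) (p : S1) : Prop :=
  g p = p ∧ ∃ I : GoodInt, I.carrier ∩ FixSet g = {p} ∧
    I.carrier ⊆ ⇑g '' closure I.carrier

/-- `g` is elliptic: nontrivial of finite order. -/
def Elliptic (g : Equiv.Perm S1) : Prop := g ≠ 1 ∧ IsOfFinOrder g

/-- `g` is parabolic: it has exactly one fixed point. -/
def Parabolic (g : Equiv.Perm S1) : Prop := ∃! x : S1, g x = x

/-- `g` is hyperbolic: exactly two fixed points, one attracting and one
repelling. -/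
def Hyperbolic (g : Equiv.Perm S1) : Prop :=
  ∃ a b : S1, a ≠ b ∧ FixSet g = {a, b} ∧ IsAttractingFix g a ∧ IsRepellingFix g b

/-- `g` is pseudo-Anosov-like for the pair `(L1, L2)`: nontrivial, neither
elliptic nor parabolic, and preserving both gaps of some interleaving pair. -/
def PAlike (L1 L2 : LamSys) (g : Equiv.Perm S1) : Prop :=
  g ≠ 1 ∧ ¬ Elliptic g ∧ ¬ Parabolic g ∧
  ∃ G1 G2 : Set GoodInt, L1.IsGap G1 ∧ L2.IsGap G2 ∧ Interleave G1 G2 ∧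
    MapsGapOnto g G1 ∧ MapsGapOnto g G2

/-- `g` is properly pseudo-Anosov: pA-like with nonempty fixed point set. -/
def ProperlyPA (L1 L2 : LamSys) (g : Equiv.Perm S1) : Prop :=
  PAlike L1 L2 g ∧ (FixSet g).Nonempty

/-- Two leaves are linked: each of the two complementary components of the
vertex set of one contains a vertex of the other. -/
def LeavesLinked (I J : GoodInt) : Prop :=
  (I.carrier ∩ J.verts).Nonempty ∧ (I.dual.carrier ∩ J.verts).Nonempty

/-- Two gaps are linked: they contain a linked pair of boundary leaves. -/
def GapsLinked (G1 G2 : Set GoodInt) : Prop :=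
  ∃ I1 ∈ G1, ∃ I2 ∈ G2, LeavesLinked I1 I2

/-- Gaps `G1`, `G2` cross: there are distinct pairs `{I₁, J₁} ⊆ G1`,
`{I₂, J₂} ⊆ G2` such that for each `i`, the vertex set of the other gap is
contained in `Iᵢ ∪ Jᵢ` and meets `Iᵢ` in exactly one point. -/
def GapsCross (G1 G2 : Set GoodInt) : Prop :=
  ∃ I1 ∈ G1, ∃ J1 ∈ G1, ∃ I2 ∈ G2, ∃ J2 ∈ G2,
    I1.carrier ⊂ J1.dual.carrier ∧ I2.carrier ⊂ J2.dual.carrier ∧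
    gapVerts G2 ⊆ I1.carrier ∪ J1.carrier ∧
    (∃! x : S1, x ∈ I1.carrier ∩ gapVerts G2) ∧
    gapVerts G1 ⊆ I2.carrier ∪ J2.carrier ∧
    (∃! x : S1, x ∈ I2.carrier ∩ gapVerts G1)

/-- The Baumslag–Solitar group `BS(m,n) = ⟨a, b | b aᵐ b⁻¹ = aⁿ⟩`,
with `a = FreeGroup.of false` and `b = FreeGroup.of true`. -/
abbrev BSGroup (m n : ℤ) : Type :=
  PresentedGroup
    ({FreeGroup.of true * FreeGroup.of false ^ m * (FreeGroup.of true)⁻¹ *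
        (FreeGroup.of false ^ n)⁻¹} : Set (FreeGroup Bool))




/-! ### A linear coordinate on the circle, cut open at a point -/

/-- The point of the circle at counterclockwise distance `t` from `x`. For `t ∈ [0, 1]` this
cuts the circle open at `x`; both `0` and `1` give `x`. -/
def pt (x : S1) (t : ℝ) : S1 := x + (t : S1)

/-- The coordinate in `[0, 1)` of a point of the circle cut open at `x`. -/
noncomputable def crd (x z : S1) : ℝ := (AddCircle.equivIco (1 : ℝ) 0 (z - x) : ℝ)

lemma crd_nonneg (x z : S1) : 0 ≤ crd x z := (AddCircle.equivIco (1 : ℝ) 0 (z - x)).2.1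

lemma crd_lt_one (x z : S1) : crd x z < 1 := by
  simpa [crd] using (AddCircle.equivIco (1 : ℝ) 0 (z - x)).2.2

lemma pt_crd (x z : S1) : pt x (crd x z) = z := by
  unfold pt crd
  rw [AddCircle.coe_equivIco]
  abel

lemma crd_pt (x : S1) {t : ℝ} (h0 : 0 ≤ t) (h1 : t < 1) : crd x (pt x t) = t := by
  unfold pt crd
  rw [add_sub_cancel_left, AddCircle.equivIco_coe_eq (by simpa using ⟨h0, h1⟩)]

lemma pt_one (x : S1) : pt x 1 = pt x 0 := by
  unfold pt
  have : ((1 : ℝ) : S1) = 0 := AddCircle.coe_period (1 : ℝ)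
  rw [this]; simp

lemma pt_zero (x : S1) : pt x 0 = x := by simp [pt]

lemma toIoc_aux {a b c : ℝ} (h : a < c ∧ c ≤ a + 1) (hb : b = c ∨ b + 1 = c) :
    toIocMod (zero_lt_one : (0 : ℝ) < 1) a b = c := by
  rw [toIocMod_eq_iff]
  refine ⟨h, ?_⟩
  rcases hb with hb | hb
  · exact ⟨0, by simp [hb]⟩
  · exact ⟨-1, by simp; linarith⟩

lemma toIco_aux {a b c : ℝ} (h : a ≤ c ∧ c < a + 1) (hb : b = c ∨ b + 1 = c) :
    toIcoMod (zero_lt_one : (0 : ℝ) < 1) a b = c := by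
  rw [toIcoMod_eq_iff]
  refine ⟨h, ?_⟩
  rcases hb with hb | hb
  · exact ⟨0, by simp [hb]⟩
  · exact ⟨-1, by simp; linarith⟩

lemma sbtw_pt (x : S1) (r s t : ℝ) : sbtw (pt x r) (pt x s) (pt x t) ↔
    toIocMod (zero_lt_one : (0 : ℝ) < 1) t r < toIcoMod (zero_lt_one : (0 : ℝ) < 1) t s := by
  obtain ⟨y, rfl⟩ := QuotientAddGroup.mk_surjective x
  have e : ∀ q : ℝ, pt (QuotientAddGroup.mk y) q = ((y + q : ℝ) : S1) := fun q => rfl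
  rw [e, e, e, sbtw_iff_not_btw]
  have := @QuotientAddGroup.btw_coe_iff' ℝ _ _ _ _ 1 ⟨zero_lt_one⟩ (y + t) (y + s) (y + r)
  rw [← not_le]
  refine not_congr (this.trans ?_)
  rw [show y + s - (y + t) = s - t by ring, show y + r - (y + t) = r - t by ring,
    toIocMod_sub_eq_sub, toIcoMod_sub_eq_sub]
  simp

lemma sbtw_linear (x : S1) {u w v : ℝ} (hu : 0 ≤ u) (huv : u < v) (hv : v ≤ 1)
    (h : 0 < u ∨ v < 1) (hw : 0 ≤ w) (hw1 : w < 1) :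
    sbtw (pt x u) (pt x w) (pt x v) ↔ u < w ∧ w < v := by
  have h1 : v < u + 1 := by rcases h with h | h <;> linarith
  rw [sbtw_pt, toIoc_aux (c := u + 1) ⟨h1, by linarith⟩ (Or.inr rfl)]
  by_cases hvw : v ≤ w
  · rw [toIco_aux (c := w) ⟨hvw, by linarith⟩ (Or.inl rfl)]
    constructor
    · intro h; linarith
    · intro h; linarith [h.2]
  · push Not at hvw
    rw [toIco_aux (c := w + 1) ⟨by linarith, by linarith⟩ (Or.inr rfl)]
    constructor
    · intro h; exact ⟨by linarith, hvw⟩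
    · intro h; linarith [h.1]

lemma sbtw_linear_dual (x : S1) {u w v : ℝ} (hu : 0 ≤ u) (huv : u < v) (hv : v ≤ 1)
    (h : v < 1 ∨ 0 < w) (hw : 0 ≤ w) (hw1 : w < 1) :
    sbtw (pt x v) (pt x w) (pt x u) ↔ w < u ∨ v < w := by
  rw [sbtw_pt, toIoc_aux (c := v) ⟨huv, by linarith⟩ (Or.inl rfl)]
  by_cases huw : u ≤ w
  · rw [toIco_aux (c := w) ⟨huw, by linarith⟩ (Or.inl rfl)]
    constructor
    · exact Or.inr
    · rintro (h | h) <;> linarith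
  · push Not at huw
    rw [toIco_aux (c := w + 1) ⟨by linarith, by linarith⟩ (Or.inr rfl)]
    constructor
    · intro; exact Or.inl huw
    · intro; rcases h with h | h <;> linarith

/-- `I` is the interval `(u, v)` in the coordinate of the circle cut open at `x`. Here
`0 ≤ u < v ≤ 1`, so that `I` does not contain `x`, and `v = 1` encodes the right endpoint `x`. -/
def Rep (x : S1) (u v : ℝ) (I : GoodInt) : Prop :=
  0 ≤ u ∧ u < v ∧ v ≤ 1 ∧ I.a = pt x u ∧ I.b = pt x v

namespace Rep

variable {x : S1} {u v u' v' : ℝ} {I J : GoodInt}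

lemma proper (h : Rep x u v I) : 0 < u ∨ v < 1 := by
  obtain ⟨h0, h1, h2, ha, hb⟩ := h
  by_contra! hc
  have e1 : u = 0 := le_antisymm hc.1 h0
  have e2 : v = 1 := le_antisymm h2 hc.2
  exact I.ne (by rw [ha, hb, e1, e2, pt_one])

lemma crd_a (h : Rep x u v I) : crd x I.a = u := by
  obtain ⟨h0, h1, h2, ha, hb⟩ := h
  rw [ha, crd_pt x h0 (by linarith)]

lemma crd_b (h : Rep x u v I) : (v < 1 ∧ crd x I.b = v) ∨ (v = 1 ∧ crd x I.b = 0) := by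
  obtain ⟨h0, h1, h2, ha, hb⟩ := h
  rcases h2.lt_or_eq with h2 | h2
  · left; exact ⟨h2, by rw [hb, crd_pt x (by linarith) h2]⟩
  · right; exact ⟨h2, by rw [hb, h2, pt_one, crd_pt x le_rfl one_pos]⟩

lemma unique (h : Rep x u v I) (h' : Rep x u' v' I) : u = u' ∧ v = v' := by
  refine ⟨h.crd_a.symm.trans h'.crd_a, ?_⟩
  have := h.1; have := h.2.1; have := h'.1; have := h'.2.1
  rcases h.crd_b with ⟨a, b⟩ | ⟨a, b⟩ <;> rcases h'.crd_b with ⟨a', b'⟩ | ⟨a', b'⟩ <;> linarith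

lemma ext (h : Rep x u v I) (h' : Rep x u v J) : I = J := by
  obtain ⟨h0, h1, h2, ha, hb⟩ := h
  obtain ⟨h0', h1', h2', ha', hb'⟩ := h'
  cases I; cases J
  simp only at ha hb ha' hb'
  subst ha hb ha' hb'
  rfl

lemma mem (h : Rep x u v I) (z : S1) : z ∈ I.carrier ↔ u < crd x z ∧ crd x z < v := by
  have hp := h.proper
  obtain ⟨h0, h1, h2, ha, hb⟩ := h
  rw [← sbtw_linear x h0 h1 h2 hp (crd_nonneg x z) (crd_lt_one x z), pt_crd, ← ha, ← hb]
  rfl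

lemma mem_pt (h : Rep x u v I) {t : ℝ} (h0 : 0 ≤ t) (h1 : t < 1) :
    pt x t ∈ I.carrier ↔ u < t ∧ t < v := by
  rw [h.mem, crd_pt x h0 h1]

lemma dual_mem_pt (h : Rep x u v I) {t : ℝ} (h0 : 0 ≤ t) (h1 : t < 1) (hp : v < 1 ∨ 0 < t) :
    pt x t ∈ I.dual.carrier ↔ t < u ∨ v < t := by
  obtain ⟨h0', h1', h2, ha, hb⟩ := h
  rw [← sbtw_linear_dual x h0' h1' h2 hp h0 h1, ← ha, ← hb]
  rfl

/-- If `I` ends at `x`, its dual is again an interval in the coordinate. -/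
lemma dual_right (h : Rep x u 1 I) : Rep x 0 u I.dual := by
  have hp := h.proper
  obtain ⟨h0, h1, h2, ha, hb⟩ := h
  exact ⟨le_rfl, by rcases hp with h | h <;> linarith, h1.le, by rw [← pt_one]; exact hb, ha⟩

/-- If `I` starts at `x`, its dual is again an interval in the coordinate. -/
lemma dual_left (h : Rep x 0 v I) : Rep x v 1 I.dual := by
  have hp := h.proper
  obtain ⟨h0, h1, h2, ha, hb⟩ := h
  exact ⟨h1.le, by rcases hp with h | h <;> linarith, le_rfl, hb, by rw [pt_one]; exact ha⟩

end Rep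

lemma GoodInt.dual_dual (I : GoodInt) : I.dual.dual = I := rfl

/-- A good interval is either an interval in the coordinate, or it contains the base point `x`
and its dual is such an interval. -/
lemma rep_or (x : S1) (I : GoodInt) :
    (∃ u v, Rep x u v I) ∨ (∃ u v, 0 < u ∧ v < 1 ∧ Rep x u v I.dual) := by
  have ha := pt_crd x I.a
  have hb := pt_crd x I.b
  have a0 := crd_nonneg x I.a
  have b0 := crd_nonneg x I.b
  have a1 := crd_lt_one x I.a
  have b1 := crd_lt_one x I.b
  rcases lt_trichotomy (crd x I.a) (crd x I.b) with h | h | h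
  · left; exact ⟨_, _, a0, h, b1.le, ha.symm, hb.symm⟩
  · exact absurd (ha.symm.trans ((congrArg (pt x) h).trans hb)) I.ne
  · rcases b0.eq_or_lt with h0 | h0
    · left
      exact ⟨_, 1, a0, a1, le_rfl, ha.symm, by rw [pt_one, h0]; exact hb.symm⟩
    · right
      exact ⟨_, _, h0, a1, b0, h, a1.le, hb.symm, ha.symm⟩

/-! ### The lamination in the coordinate -/

/-- `(u, v)`, in the coordinate of the circle cut open at `x`, is an element of `L`. -/
def Lam (L : LamSys) (x : S1) (u v : ℝ) : Prop := ∃ I ∈ L.mem, Rep x u v I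

/-- Unlinkedness: no element of `L` separates the endpoints of another one. -/
lemma no_cross {L : LamSys} {I J : GoodInt} (hI : I ∈ L.mem) (hJ : J ∈ L.mem)
    (ha : J.a ∈ I.carrier) (hb : J.b ∈ I.dual.carrier) : False := by
  have n1 : J.a ∉ J.carrier := (sbtw_irrefl_left : ¬ sbtw J.a J.a J.b)
  have n2 : J.b ∉ J.carrier := (sbtw_irrefl_right : ¬ sbtw J.a J.b J.b)
  have n3 : J.a ∉ J.dual.carrier := (sbtw_irrefl_right : ¬ sbtw J.b J.a J.a)
  have n4 : J.b ∉ J.dual.carrier := (sbtw_irrefl_left : ¬ sbtw J.b J.b J.a)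
  rcases L.unlinked I hI J hJ with h | h | h | h
  · exact n1 (h ha)
  · exact n2 (h hb)
  · exact n3 (h ha)
  · exact n4 (h hb)

namespace Lam

variable {L : LamSys} {x : S1} {u v u' v' t : ℝ}

lemma bounds (h : Lam L x u v) : 0 ≤ u ∧ u < v ∧ v ≤ 1 ∧ (0 < u ∨ v < 1) := by
  obtain ⟨I, -, h⟩ := h
  exact ⟨h.1, h.2.1, h.2.2.1, h.proper⟩

lemma unlinked (h : Lam L x u v) (h' : Lam L x u' v') (h1 : u < u') (h2 : u' < v)
    (h3 : v < v') (hp : 0 < u ∨ v' < 1) : False := by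
  obtain ⟨I, hI, h⟩ := h
  obtain ⟨J, hJ, h'⟩ := h'
  refine no_cross hI hJ ?_ ?_
  · rw [h'.2.2.2.1, h.mem_pt h'.1 (h'.2.1.trans_le h'.2.2.1)]
    exact ⟨h1, h2⟩
  · rw [h'.2.2.2.2]
    have hv : v < 1 := h3.trans_le h'.2.2.1
    have u0 := h.1
    rcases h'.2.2.1.lt_or_eq with h4 | h4
    · rw [h.dual_mem_pt (by linarith [h.2.1]) h4 (Or.inl hv)]
      exact Or.inr h3
    · rw [h4, pt_one, h.dual_mem_pt le_rfl one_pos (Or.inl hv)]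
      left; rcases hp with hp | hp <;> linarith

lemma to_right (h : Lam L x 0 t) : Lam L x t 1 := by
  obtain ⟨I, hI, h⟩ := h
  exact ⟨_, L.dual_mem I hI, h.dual_left⟩

lemma to_left (h : Lam L x t 1) : Lam L x 0 t := by
  obtain ⟨I, hI, h⟩ := h
  exact ⟨_, L.dual_mem I hI, h.dual_right⟩

/-- Closedness of `L` in the coordinate: the union `(U, V)` of a nonempty chain of elements
`(p.1, p.2)` of `L`, indexed by an arbitrary set of pairs, lies in `L` unless `(U, V) = (0, 1)`.
Choosing elements of the chain whose lengths increase to the supremum of all lengths reduces this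
to sequential closedness. -/
lemma of_chain {S : Set (ℝ × ℝ)} (hne : S.Nonempty) (hS : ∀ p ∈ S, Lam L x p.1 p.2)
    (hch : ∀ p ∈ S, ∀ q ∈ S, (q.1 ≤ p.1 ∧ p.2 ≤ q.2) ∨ (p.1 ≤ q.1 ∧ q.2 ≤ p.2))
    {U V : ℝ} (hU : IsGLB (Prod.fst '' S) U) (hV : IsLUB (Prod.snd '' S) V)
    (hp : 0 < U ∨ V < 1) : Lam L x U V := by
  have hUle : ∀ p ∈ S, U ≤ p.1 := fun p hp => hU.1 ⟨p, hp, rfl⟩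
  have hVle : ∀ p ∈ S, p.2 ≤ V := fun p hp => hV.1 ⟨p, hp, rfl⟩
  have hU0 : 0 ≤ U := hU.2 (by rintro _ ⟨p, hp, rfl⟩; exact (hS p hp).bounds.1)
  have hV1 : V ≤ 1 := hV.2 (by rintro _ ⟨p, hp, rfl⟩; exact (hS p hp).bounds.2.2.1)
  obtain ⟨p0, hp0⟩ := hne
  have hUV : U < V := by linarith [hUle p0 hp0, hVle p0 hp0, (hS p0 hp0).bounds.2.1]
  set D : Set ℝ := (fun p : ℝ × ℝ => p.2 - p.1) '' S with hD
  have hDb : BddAbove D := by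
    refine ⟨1, ?_⟩
    rintro _ ⟨p, hp, rfl⟩
    have := (hS p hp).bounds
    simp only
    linarith
  obtain ⟨l, lmono, llim, lmem⟩ := exists_seq_tendsto_sSup (S := D) ⟨_, p0, hp0, rfl⟩ hDb
  choose p hpS hpl using lmem
  simp only at hpl
  choose I hI hrep using fun n => hS (p n) (hpS n)
  have hne : pt x U ≠ pt x V := by
    intro h
    have h := congrArg (crd x) h
    rw [crd_pt x hU0 (by linarith)] at h
    rcases hV1.lt_or_eq with h1 | h1
    · rw [crd_pt x (by linarith) h1] at h; linarith
    · rw [h1, pt_one, crd_pt x le_rfl one_pos] at h; rcases hp with hp | hp <;> linarith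
  have hK : Rep x U V ⟨pt x U, pt x V, hne⟩ := ⟨hU0, hUV, hV1, rfl, rfl⟩
  refine ⟨_, L.chain_closed I hI ?_ _ ?_, hK⟩
  · intro n z hz
    rw [(hrep _).mem] at hz ⊢
    have h1 := lmono (Nat.le_succ n)
    simp only [Nat.succ_eq_add_one] at h1
    rw [← hpl, ← hpl] at h1
    rcases hch _ (hpS n) _ (hpS (n + 1)) with h | h <;> constructor <;> linarith [hz.1, hz.2]
  · ext z
    rw [hK.mem, mem_iUnion]
    constructor
    · rintro ⟨hz1, hz2⟩
      -- some element of the chain contains `z`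
      obtain ⟨q, hq, hzq⟩ : ∃ q ∈ S, q.1 < crd x z ∧ crd x z < q.2 := by
        obtain ⟨_, ⟨q, hq, rfl⟩, -, h1⟩ := hU.exists_between hz1
        obtain ⟨_, ⟨r, hr, rfl⟩, h2, -⟩ := hV.exists_between hz2
        rcases hch q hq r hr with h | h
        · exact ⟨r, hr, by linarith, h2⟩
        · exact ⟨q, hq, h1, by linarith⟩
      set ε := min (crd x z - q.1) (q.2 - crd x z) with hε
      have hε0 : 0 < ε := lt_min (by linarith) (by linarith)
      have e1 : ε ≤ crd x z - q.1 := min_le_left _ _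
      have e2 : ε ≤ q.2 - crd x z := min_le_right _ _
      have hlt : q.2 - q.1 - ε < sSup D := by
        have : q.2 - q.1 ≤ sSup D := le_csSup hDb ⟨q, hq, rfl⟩
        linarith
      obtain ⟨n, hn⟩ := (llim.eventually (lt_mem_nhds hlt)).exists
      rw [← hpl] at hn
      refine ⟨n, ?_⟩
      rw [(hrep n).mem]
      rcases hch q hq _ (hpS n) with h | h <;> constructor <;> linarith
    · rintro ⟨n, hn⟩
      rw [(hrep n).mem] at hn
      have := hUle _ (hpS n)
      have := hVle _ (hpS n)
      constructor <;> linarith [hn.1, hn.2]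

end Lam

/-! ### The gap between two consecutive leaves through `x` -/

/-- The gap of `L` lying between the leaves `(0, a)` and `(b, 1)` through `x`. Its elements are
these two intervals and the maximal elements of `L` inside `(a, b)`. -/
def stripGap (L : LamSys) (x : S1) (a b : ℝ) : Set GoodInt :=
  {I | I ∈ L.mem ∧ ∃ u v, Rep x u v I ∧ ((u = 0 ∧ v = a) ∨ (u = b ∧ v = 1) ∨
    (a ≤ u ∧ v ≤ b ∧ ∀ u' v', Lam L x u' v' → a ≤ u' → u' ≤ u → v ≤ v' → v' ≤ b →
      u' = u ∧ v' = v))}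

/-- Every element of `L` inside `(a, b)` is contained in a maximal one. -/
lemma exists_maximal {L : LamSys} {x : S1} {a b u v : ℝ} (ha : 0 < a) (h : Lam L x u v)
    (hau : a ≤ u) (hvb : v ≤ b) :
    ∃ U V, Lam L x U V ∧ a ≤ U ∧ U ≤ u ∧ v ≤ V ∧ V ≤ b ∧
      ∀ u' v', Lam L x u' v' → a ≤ u' → u' ≤ U → V ≤ v' → v' ≤ b → u' = U ∧ v' = V := by
  set S : Set (ℝ × ℝ) := {p | Lam L x p.1 p.2 ∧ a ≤ p.1 ∧ p.1 ≤ u ∧ v ≤ p.2 ∧ p.2 ≤ b} with hS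
  have hmem : (u, v) ∈ S := ⟨h, hau, le_rfl, le_rfl, hvb⟩
  have huv := h.bounds.2.1
  have b1 : BddBelow (Prod.fst '' S) := ⟨a, by rintro _ ⟨p, hp, rfl⟩; exact hp.2.1⟩
  have b2 : BddAbove (Prod.snd '' S) := ⟨b, by rintro _ ⟨p, hp, rfl⟩; exact hp.2.2.2.2⟩
  have n1 : (Prod.fst '' S).Nonempty := ⟨_, _, hmem, rfl⟩
  have n2 : (Prod.snd '' S).Nonempty := ⟨_, _, hmem, rfl⟩
  have gU := isGLB_csInf n1 b1
  have gV := isLUB_csSup n2 b2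
  set U := sInf (Prod.fst '' S)
  set V := sSup (Prod.snd '' S)
  have haU : a ≤ U := gU.2 (by rintro _ ⟨p, hp, rfl⟩; exact hp.2.1)
  have hVb : V ≤ b := gV.2 (by rintro _ ⟨p, hp, rfl⟩; exact hp.2.2.2.2)
  have hUu : U ≤ u := gU.1 ⟨_, hmem, rfl⟩
  have hvV : v ≤ V := gV.1 ⟨_, hmem, rfl⟩
  refine ⟨U, V, ?_, haU, hUu, hvV, hVb, ?_⟩
  · refine Lam.of_chain ⟨_, hmem⟩ (fun p hp => hp.1) ?_ gU gV (Or.inl (by linarith))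
    rintro ⟨p1, p2⟩ ⟨hp, hp1, hp2, hp3, hp4⟩ ⟨q1, q2⟩ ⟨hq, hq1, hq2, hq3, hq4⟩
    simp only at *
    by_contra! hc
    rcases lt_trichotomy q1 p1 with h1 | h1 | h1
    · exact hq.unlinked hp h1 (by linarith) (hc.1 h1.le) (Or.inl (by linarith))
    · linarith [hc.1 h1.le, hc.2 h1.ge]
    · exact hp.unlinked hq h1 (by linarith) (hc.2 h1.le) (Or.inl (by linarith))
  · intro u' v' h' h1 h2 h3 h4
    have hm : (u', v') ∈ S := ⟨h', h1, by linarith, by linarith, h4⟩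
    exact ⟨le_antisymm h2 (gU.1 ⟨_, hm, rfl⟩), le_antisymm (gV.1 ⟨_, hm, rfl⟩) h3⟩

section strip

variable {L : LamSys} {x : S1} {a b : ℝ}

lemma stripGap_isGap (ha : Lam L x 0 a) (hb : Lam L x 0 b) (hab : a < b)
    (hcons : ∀ t, Lam L x 0 t → t ≤ a ∨ b ≤ t) : L.IsGap (stripGap L x a b) := by
  have ha0 := ha.bounds.2.1
  have hb1 : b < 1 := by rcases hb.bounds.2.2.2 with h | h <;> linarith
  refine ⟨fun I hI => hI.1, ?_, ?_⟩
  · rintro I ⟨hI, u, v, hr, hc⟩ J ⟨hJ, u', v', hr', hc'⟩ hne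
    have huv := hr.2.1
    have huv' := hr'.2.1
    suffices v ≤ u' ∨ v' ≤ u by
      rw [Set.disjoint_left]
      intro z hz hz'
      rw [hr.mem] at hz
      rw [hr'.mem] at hz'
      rcases this with h | h <;> linarith [hz.1, hz.2, hz'.1, hz'.2]
    by_contra! hlt
    have key : ¬ (u = u' ∧ v = v') := by
      rintro ⟨rfl, rfl⟩; exact hne (hr.ext hr')
    have hL : Lam L x u v := ⟨I, hI, hr⟩
    have hL' : Lam L x u' v' := ⟨J, hJ, hr'⟩
    rcases hc with ⟨c1, c2⟩ | ⟨c1, c2⟩ | ⟨c1, c2, c3⟩ <;>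
      rcases hc' with ⟨d1, d2⟩ | ⟨d1, d2⟩ | ⟨d1, d2, d3⟩
    · exact key ⟨by linarith, by linarith⟩
    · linarith
    · linarith
    · linarith
    · exact key ⟨by linarith, by linarith⟩
    · linarith
    · linarith
    · linarith
    · -- two overlapping maximal intervals are nested by unlinkedness, hence equal
      rcases lt_trichotomy u u' with h | h | h
      · by_cases hv : v < v'
        · exact hL.unlinked hL' h hlt.1 hv (Or.inl (by linarith))
        · have := d3 u v hL c1 h.le (not_lt.1 hv) c2
          linarith
      · rcases le_total v v' with hv | hv
        · have := c3 u' v' hL' d1 h.ge hv d2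
          exact key ⟨h, this.2.symm⟩
        · have := d3 u v hL c1 h.le hv c2
          exact key ⟨h, this.2⟩
      · by_cases hv : v' < v
        · exact hL'.unlinked hL h hlt.2 hv (Or.inl (by linarith))
        · have := c3 u' v' hL' d1 h.le (not_lt.1 hv) d2
          linarith
  · -- it suffices to treat intervals avoiding `x`, since the claim is symmetric under duality
    suffices H : ∀ I ∈ L.mem, ∀ u v, Rep x u v I →
        ∃ J ∈ stripGap L x a b, I.carrier ⊆ J.carrier ∨ I.dual.carrier ⊆ J.carrier by
      intro I hI
      rcases rep_or x I with ⟨u, v, h⟩ | ⟨u, v, -, -, h⟩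
      · exact H I hI u v h
      · obtain ⟨J, hJ, h⟩ := H I.dual (L.dual_mem I hI) u v h
        exact ⟨J, hJ, h.symm⟩
    intro I hI u v hr
    obtain ⟨A, hA, rA⟩ := id ha
    obtain ⟨B, hB, rB⟩ := hb.to_right
    have gA : A ∈ stripGap L x a b := ⟨hA, 0, a, rA, Or.inl ⟨rfl, rfl⟩⟩
    have gB : B ∈ stripGap L x a b := ⟨hB, b, 1, rB, Or.inr (Or.inl ⟨rfl, rfl⟩)⟩
    have mono : ∀ {p q p' q' : ℝ} {M N : GoodInt}, Rep x p q M → Rep x p' q' N → p' ≤ p →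
        q ≤ q' → M.carrier ⊆ N.carrier := by
      intro p q p' q' M N hM hN h1 h2 z hz
      rw [hM.mem] at hz
      rw [hN.mem]
      exact ⟨by linarith [hz.1], by linarith [hz.2]⟩
    have hL : Lam L x u v := ⟨I, hI, hr⟩
    have u0 := hr.1
    have huv := hr.2.1
    rcases hr.2.2.1.lt_or_eq with v1 | rfl
    · rcases u0.eq_or_lt with rfl | u0
      · rcases hcons v hL with h | h
        · exact ⟨A, gA, Or.inl (mono hr rA le_rfl h)⟩
        · exact ⟨B, gB, Or.inr (mono hr.dual_left rB h le_rfl)⟩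
      · by_cases hva : v ≤ a
        · exact ⟨A, gA, Or.inl (mono hr rA u0.le hva)⟩
        · push Not at hva
          have hau : a ≤ u := by
            by_contra! h
            exact ha.unlinked hL u0 h hva (Or.inr v1)
          by_cases hvb : v ≤ b
          · obtain ⟨U, V, ⟨J, hJ, rJ⟩, h1, h2, h3, h4, h5⟩ := exists_maximal ha0 hL hau hvb
            exact ⟨J, ⟨hJ, U, V, rJ, Or.inr (Or.inr ⟨h1, h4, h5⟩)⟩, Or.inl (mono hr rJ h2 h3)⟩
          · push Not at hvb
            have hbu : b ≤ u := by
              by_contra! h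
              exact hb.unlinked hL u0 h hvb (Or.inr v1)
            exact ⟨B, gB, Or.inl (mono hr rB hbu v1.le)⟩
    · rcases hcons u hL.to_left with h | h
      · exact ⟨A, gA, Or.inr (mono hr.dual_right rA le_rfl h)⟩
      · exact ⟨B, gB, Or.inl (mono hr rB h le_rfl)⟩

lemma stripGap_not_leaf (ha : Lam L x 0 a) (hb : Lam L x 0 b) (hab : a < b) :
    ¬ IsLeafGap (stripGap L x a b) := by
  have ha0 := ha.bounds.2.1
  have hb1 : b < 1 := by rcases hb.bounds.2.2.2 with h | h <;> linarith
  obtain ⟨A, hA, rA⟩ := ha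
  obtain ⟨B, hB, rB⟩ := hb.to_right
  have gA : A ∈ stripGap L x a b := ⟨hA, 0, a, rA, Or.inl ⟨rfl, rfl⟩⟩
  have gB : B ∈ stripGap L x a b := ⟨hB, b, 1, rB, Or.inr (Or.inl ⟨rfl, rfl⟩)⟩
  have n1 : B ≠ A := by rintro rfl; linarith [(rA.unique rB).1]
  have n2 : B ≠ A.dual := by rintro rfl; linarith [(rA.dual_left.unique rB).1]
  rintro ⟨I, hI⟩
  rw [hI] at gA gB
  rcases gA with rfl | rfl <;> rcases gB with gB | gB
  · exact n1 gB
  · exact n2 gB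
  · exact n2 gB
  · exact n1 gB

lemma mem_gapVerts_stripGap : x ∈ gapVerts (stripGap L x a b) := by
  intro h
  simp only [mem_iUnion] at h
  obtain ⟨I, ⟨hI, u, v, hr, -⟩, hx⟩ := h
  have h0 := crd_pt x le_rfl one_pos
  rw [pt_zero] at h0
  rw [hr.mem, h0] at hx
  linarith [hr.1, hx.1]

/-- The interval `(b, 1)` belongs only to the first of the two gaps. -/
lemma stripGap_ne {c d : ℝ} (ha : Lam L x 0 a) (hb : Lam L x 0 b) (hab : a < b)
    (hd : Lam L x 0 d) (hbd : b < d) :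
    stripGap L x a b ≠ stripGap L x c d := by
  have ha0 := ha.bounds.2.1
  have hd1 : d < 1 := by rcases hd.bounds.2.2.2 with h | h <;> linarith
  obtain ⟨B, hB, rB⟩ := hb.to_right
  have gB : B ∈ stripGap L x a b := ⟨hB, b, 1, rB, Or.inr (Or.inl ⟨rfl, rfl⟩)⟩
  intro h
  rw [h] at gB
  obtain ⟨-, u, v, hr, hc⟩ := gB
  obtain ⟨rfl, rfl⟩ := hr.unique rB
  rcases hc with ⟨h1, -⟩ | ⟨h1, -⟩ | ⟨-, h1, -⟩ <;> linarith

end strip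

/-! ### Consecutive leaves through `x` -/

section consecutive

variable {L : LamSys} {x : S1} {a b : ℝ}

/-- Total disconnectedness rules out a full interval of leaves through `x`. Given leaves `(0, a)`
and `(b, 1)`, take elements `M ⊇ (0, a)` and `N ⊇ (b, 1)` of a non-leaf gap. Either `M = N`
contains `x`, and `M` is linked with a leaf through `x` ending in its complement; or
`M = (0, p)` and `N = (q, 1)`, and then `p < q`, since `p = q` would make the gap a leaf, so that
a leaf through `x` ending between `p` and `q` lies on no element of the gap. -/
lemma exists_not_leaf (htd : L.TotDisc) (ha : Lam L x 0 a) (hb : Lam L x 0 b) (hab : a < b) :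
    ∃ t, a < t ∧ t < b ∧ ¬ Lam L x 0 t := by
  by_contra! hall
  have ha0 := ha.bounds.2.1
  have hb1 : b < 1 := by rcases hb.bounds.2.2.2 with h | h <;> linarith
  obtain ⟨A, hA, rA⟩ := id ha
  obtain ⟨B, hB, rB⟩ := hb.to_right
  have hsub : A.carrier ⊂ B.dual.carrier := by
    rw [Set.ssubset_iff_of_subset]
    · refine ⟨pt x a, ?_, ?_⟩
      · rw [rB.dual_right.mem_pt ha0.le (by linarith)]; exact ⟨ha0, hab⟩
      · rw [rA.mem_pt ha0.le (by linarith)]; exact fun h => lt_irrefl _ h.2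
    · intro z hz
      rw [rA.mem] at hz
      rw [rB.dual_right.mem]
      exact ⟨hz.1, hz.2.trans hab⟩
  obtain ⟨G, hG, hGl, M, hM, N, hN, hAM, hBN⟩ := htd A hA B hB hsub
  have meet : ∀ {P Q : GoodInt} {t : ℝ}, P ∈ G → Q ∈ G → pt x t ∈ P.carrier →
      pt x t ∈ Q.carrier → P = Q := by
    intro P Q t hP hQ h1 h2
    by_contra hne
    exact Set.disjoint_left.1 (hG.2.1 P hP Q hQ hne) h1 h2
  have inA : ∀ t, 0 < t → t < a → pt x t ∈ M.carrier := fun t h1 h2 =>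
    hAM ((rA.mem_pt h1.le (by linarith)).2 ⟨h1, h2⟩)
  have inB : ∀ t, b < t → t < 1 → pt x t ∈ N.carrier := fun t h1 h2 =>
    hBN ((rB.mem_pt (by linarith) h2).2 ⟨h1, h2⟩)
  -- if `M` misses `x` it must start there, because it contains points arbitrarily close to `x`;
  -- symmetrically for `N` below
  have linM : ∀ p q, Rep x p q M → p = 0 ∧ a ≤ q ∧ q < 1 := by
    intro p q h
    have hp0 := h.1
    have hp : p = 0 := by
      by_contra hp
      have hp' : 0 < p := lt_of_le_of_ne hp0 (Ne.symm hp)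
      have hm : 0 < min p a := lt_min hp' ha0
      have h1 := inA (min p a / 2) (by linarith) (by linarith [min_le_right p a])
      rw [h.mem_pt (by linarith) (by linarith [min_le_right p a])] at h1
      linarith [h1.1, min_le_left p a]
    refine ⟨hp, ?_, ?_⟩
    · by_contra! hq
      have := h.2.1
      have h1 := inA ((q + a) / 2) (by linarith) (by linarith)
      rw [h.mem_pt (by linarith) (by linarith)] at h1
      linarith [h1.2]
    · rcases h.proper with h | h <;> linarith
  have linN : ∀ p q, Rep x p q N → q = 1 ∧ p ≤ b ∧ 0 < p := by
    intro p q h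
    have hq0 := h.2.2.1
    have hq : q = 1 := by
      by_contra hq
      have hq' : q < 1 := lt_of_le_of_ne hq0 hq
      have hm : max q b < 1 := max_lt hq' hb1
      have := le_max_right q b
      have := le_max_left q b
      have h1 := inB ((max q b + 1) / 2) (by linarith) (by linarith)
      rw [h.mem_pt (by linarith) (by linarith)] at h1
      linarith [h1.2]
    refine ⟨hq, ?_, ?_⟩
    · by_contra! hp
      have := h.2.1
      have h1 := inB ((b + p) / 2) (by linarith) (by linarith)
      rw [h.mem_pt (by linarith) (by linarith)] at h1
      linarith [h1.1]
    · rcases h.proper with h | h <;> linarith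
  have nonlin : ∀ {P : GoodInt} {p q : ℝ}, 0 < p → q < 1 → Rep x p q P.dual →
      ∀ t, 0 ≤ t → t < 1 → (pt x t ∈ P.carrier ↔ t < p ∨ q < t) := by
    intro P p q hp hq h t h0 h1
    exact h.dual_mem_pt h0 h1 (Or.inl hq)
  rcases rep_or x M with ⟨p, q, rM⟩ | ⟨p, q, hp, hq, rM⟩ <;>
    rcases rep_or x N with ⟨p', q', rN⟩ | ⟨p', q', hp', hq', rN⟩
  · obtain ⟨rfl, haq, hq1⟩ := linM _ _ rM
    obtain ⟨rfl, hpb, hp0⟩ := linN _ _ rN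
    have hMN : M ≠ N := by
      rintro rfl
      linarith [(rM.unique rN).1]
    have hqp : q ≤ p' := by
      by_contra! hlt
      apply hMN
      refine meet (t := (q + p') / 2) hM hN ?_ ?_
      · rw [rM.mem_pt (by linarith) (by linarith)]; constructor <;> linarith
      · rw [rN.mem_pt (by linarith) (by linarith)]; constructor <;> linarith
    rcases hqp.lt_or_eq with hlt | rfl
    · obtain ⟨T, hT, rT⟩ := hall ((q + p') / 2) (by linarith) (by linarith)
      obtain ⟨P, hP, h | h⟩ := hG.2.2 T hT
      · have sub : ∀ t, 0 < t → t < (q + p') / 2 → pt x t ∈ P.carrier := fun t h1 h2 =>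
          h ((rT.mem_pt h1.le (by linarith)).2 ⟨h1, h2⟩)
        have e : P = M := meet (t := a / 2) hP hM (sub _ (by linarith) (by linarith))
          (inA _ (by linarith) (by linarith))
        rw [e] at sub
        have := sub q (by linarith) (by linarith)
        rw [rM.mem_pt (by linarith) (by linarith)] at this
        linarith [this.2]
      · have sub : ∀ t, (q + p') / 2 < t → t < 1 → pt x t ∈ P.carrier := fun t h1 h2 =>
          h ((rT.dual_left.mem_pt (by linarith) h2).2 ⟨h1, h2⟩)
        have e : P = N := meet (t := (b + 1) / 2) hP hN (sub _ (by linarith) (by linarith))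
          (inB _ (by linarith) (by linarith))
        rw [e] at sub
        have := sub p' (by linarith) (by linarith)
        rw [rN.mem_pt (by linarith) (by linarith)] at this
        linarith [this.1]
    · -- `N` is the dual of `M`, and these two leave no room for further elements of `G`
      have eN : N = M.dual := rN.ext rM.dual_left
      apply hGl
      refine ⟨M, ?_⟩
      have fin : ∀ P ∈ G, ∀ t, 0 < t → t < 1 → t ≠ q → pt x t ∈ P.carrier →
          P ∈ ({M, M.dual} : Set GoodInt) := by
        intro P hP t h0 h1 hne h
        rcases lt_or_gt_of_ne hne with hlt | hgt
        · exact Or.inl (meet hP hM h ((rM.mem_pt h0.le h1).2 ⟨h0, hlt⟩))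
        · right
          rw [mem_singleton_iff, ← eN]
          exact meet hP hN h ((rN.mem_pt h0.le h1).2 ⟨hgt, h1⟩)
      ext P
      constructor
      · intro hP
        rcases rep_or x P with ⟨r, s, rP⟩ | ⟨r, s, hr, hs, rP⟩
        · have h1 := rP.1
          have h2 := rP.2.1
          have h3 := rP.2.2.1
          by_cases hm : (r + s) / 2 = q
          · refine fin P hP ((2 * r + s) / 3) (by linarith) (by linarith)
              (fun h => by linarith) ?_
            rw [rP.mem_pt (by linarith) (by linarith)]; constructor <;> linarith
          · refine fin P hP ((r + s) / 2) (by linarith) (by linarith) hm ?_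
            rw [rP.mem_pt (by linarith) (by linarith)]; constructor <;> linarith
        · have h2 := rP.2.1
          by_cases hm : r / 2 = q
          · refine fin P hP (r / 3) (by linarith) (by linarith) (fun h => by linarith) ?_
            rw [nonlin hr hs rP _ (by linarith) (by linarith)]; left; linarith
          · refine fin P hP (r / 2) (by linarith) (by linarith) hm ?_
            rw [nonlin hr hs rP _ (by linarith) (by linarith)]; left; linarith
      · rintro (rfl | h)
        · exact hM
        · rw [mem_singleton_iff] at h
          rw [h, ← eN]; exact hN
  · obtain ⟨rfl, haq, hq1⟩ := linM _ _ rM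
    have hm : 0 < min p' q := lt_min hp' (by linarith)
    have m1 := min_le_left p' q
    have m2 := min_le_right p' q
    have e : M = N := by
      refine meet (t := min p' q / 2) hM hN ?_ ?_
      · rw [rM.mem_pt (by linarith) (by linarith)]; constructor <;> linarith
      · rw [nonlin hp' hq' rN _ (by linarith) (by linarith)]; left; linarith
    subst e
    linarith [(linN _ _ rM).1]
  · obtain ⟨rfl, hpb, hp0⟩ := linN _ _ rN
    have m1 := le_max_left p' q
    have m2 := le_max_right p' q
    have hm : max p' q < 1 := max_lt (by linarith) hq
    have e : M = N := by
      refine meet (t := (max p' q + 1) / 2) hM hN ?_ ?_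
      · rw [nonlin hp hq rM _ (by linarith) (by linarith)]; right; linarith
      · rw [rN.mem_pt (by linarith) (by linarith)]; constructor <;> linarith
    subst e
    linarith [(linM _ _ rN).1]
  · have e : M = N := by
      refine meet (t := 0) hM hN ?_ ?_
      · rw [nonlin hp hq rM _ le_rfl one_pos]; exact Or.inl hp
      · rw [nonlin hp' hq' rN _ le_rfl one_pos]; exact Or.inl hp'
    subst e
    have hpq := rM.2.1
    have hap : a ≤ p := by
      by_contra! h
      have := inA p hp h
      rw [nonlin hp hq rM _ hp.le (by linarith)] at this
      rcases this with h | h <;> linarith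
    have hqb : q ≤ b := by
      by_contra! h
      have := inB q h hq
      rw [nonlin hp hq rM _ (by linarith) hq] at this
      rcases this with h | h <;> linarith
    have hL : Lam L x p q := ⟨M.dual, L.dual_mem M (hG.1 hM), rM⟩
    exact (hall ((p + q) / 2) (by linarith) (by linarith)).unlinked hL hp (by linarith)
      (by linarith) (Or.inr hq)

/-- Between any two leaves through `x` there are two consecutive ones: the leaves through `x`
form a closed set, so the endpoints of a complementary component do. -/
lemma exists_consecutive (htd : L.TotDisc) (ha : Lam L x 0 a) (hb : Lam L x 0 b) (hab : a < b) :
    ∃ c d, a ≤ c ∧ c < d ∧ d ≤ b ∧ Lam L x 0 c ∧ Lam L x 0 d ∧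
      ∀ t, Lam L x 0 t → t ≤ c ∨ d ≤ t := by
  obtain ⟨z, haz, hzb, hz⟩ := exists_not_leaf htd ha hb hab
  have ha0 := ha.bounds.2.1
  have hb1 : b < 1 := by rcases hb.bounds.2.2.2 with h | h <;> linarith
  set S : Set ℝ := {t | Lam L x 0 t ∧ t ≤ z} with hS
  set T : Set ℝ := {t | Lam L x 0 t ∧ z ≤ t} with hT
  have gS : IsLUB S (sSup S) := isLUB_csSup ⟨a, ha, haz.le⟩ ⟨z, fun t ht => ht.2⟩
  have gT : IsGLB T (sInf T) := isGLB_csInf ⟨b, hb, hzb.le⟩ ⟨z, fun t ht => ht.2⟩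
  have s1 : a ≤ sSup S := gS.1 ⟨ha, haz.le⟩
  have s2 : sSup S ≤ z := gS.2 fun t ht => ht.2
  have t1 : sInf T ≤ b := gT.1 ⟨hb, hzb.le⟩
  have t2 : z ≤ sInf T := gT.2 fun t ht => ht.2
  have hc : Lam L x 0 (sSup S) := by
    refine Lam.of_chain (S := (fun t => ((0 : ℝ), t)) '' S) ⟨_, a, ⟨ha, haz.le⟩, rfl⟩ ?_ ?_ ?_ ?_
      (Or.inr (by linarith))
    · rintro _ ⟨t, ht, rfl⟩; exact ht.1
    · rintro _ ⟨t, ht, rfl⟩ _ ⟨s, hs, rfl⟩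
      rcases le_total t s with h | h
      · exact Or.inl ⟨le_rfl, h⟩
      · exact Or.inr ⟨le_rfl, h⟩
    · rw [Set.image_image]
      have e := Set.Nonempty.image_const (⟨a, ha, haz.le⟩ : S.Nonempty) (0 : ℝ)
      simp only [e]
      exact isGLB_singleton
    · rw [Set.image_image]; simpa using gS
  have hd : Lam L x (sInf T) 1 := by
    refine Lam.of_chain (S := (fun t => (t, (1 : ℝ))) '' T) ⟨_, b, ⟨hb, hzb.le⟩, rfl⟩ ?_ ?_ ?_ ?_
      (Or.inl (by linarith))
    · rintro _ ⟨t, ht, rfl⟩; exact ht.1.to_right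
    · rintro _ ⟨t, ht, rfl⟩ _ ⟨s, hs, rfl⟩
      rcases le_total t s with h | h
      · exact Or.inr ⟨h, le_rfl⟩
      · exact Or.inl ⟨h, le_rfl⟩
    · rw [Set.image_image]; simpa using gT
    · rw [Set.image_image]
      have e := Set.Nonempty.image_const (⟨b, hb, hzb.le⟩ : T.Nonempty) (1 : ℝ)
      simp only [e]
      exact isLUB_singleton
  refine ⟨sSup S, sInf T, s1, ?_, t1, hc, hd.to_left, fun t ht => ?_⟩
  · have : sSup S ≠ z := fun h => hz (h ▸ hc)
    exact (lt_of_le_of_ne s2 this).trans_le t2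
  · rcases le_total t z with h | h
    · exact Or.inl (gS.1 ⟨ht, h⟩)
    · exact Or.inr (gT.1 ⟨ht, h⟩)

end consecutive

/-- Three leaves through `x` would give two different non-leaf gaps with common vertex `x`. -/
lemma no_three {L : LamSys} (hl : L.Loose) (htd : L.TotDisc) {x : S1} {a b c : ℝ}
    (ha : Lam L x 0 a) (hb : Lam L x 0 b) (hc : Lam L x 0 c) (hab : a < b) (hbc : b < c) :
    False := by
  obtain ⟨p, q, -, hpq, hqb, hp, hq, h1⟩ := exists_consecutive htd ha hb hab
  obtain ⟨r, s, hbr, hrs, -, hr, hs, h2⟩ := exists_consecutive htd hb hc hbc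
  exact Set.disjoint_left.1 (hl _ _ (stripGap_isGap hp hq hpq h1) (stripGap_isGap hr hs hrs h2)
    (stripGap_not_leaf hp hq hpq) (stripGap_not_leaf hr hs hrs)
    (stripGap_ne hp hq hpq hs (by linarith))) mem_gapVerts_stripGap mem_gapVerts_stripGap

/-- A leaf with vertex `x` is `(0, t)` or its dual, where `t` is the coordinate of its other
vertex. -/
lemma exists_lam {L : LamSys} {x : S1} {I : GoodInt} (hI : I ∈ L.mem) (hx : x ∈ I.verts) :
    ∃ t J, J ∈ L.mem ∧ Rep x 0 t J ∧ (I = J ∨ I = J.dual) := by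
  have key : ∀ K ∈ L.mem, x = K.a → ∃ t, Rep x 0 t K := by
    intro K hK h
    rcases rep_or x K with ⟨u, v, r⟩ | ⟨u, v, h0, h1, r⟩
    · have h0 := crd_pt x le_rfl one_pos
      have h2 := r.crd_a
      rw [pt_zero] at h0
      rw [← h, h0] at h2
      exact ⟨v, h2 ▸ r⟩
    · have h0 := crd_pt x le_rfl one_pos
      have e : K.a = pt x v := r.2.2.2.2
      have h3 := r.2.1
      rw [pt_zero] at h0
      rw [← h] at e
      have h2 := congrArg (crd x) e
      rw [h0, crd_pt x (by linarith) h1] at h2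
      linarith
  rcases hx with hx | hx
  · obtain ⟨t, r⟩ := key I hI hx
    exact ⟨t, I, hI, r, Or.inl rfl⟩
  · obtain ⟨t, r⟩ := key I.dual (L.dual_mem I hI) hx
    exact ⟨t, I.dual, L.dual_mem I hI, r, Or.inr rfl⟩

/-- in a quite full, loose, totally disconnected lamination
system, no three pairwise distinct leaves share a common vertex. -/
theorem statement4 (L : LamSys) (hqf : L.QuiteFull) (hl : L.Loose)
    (htd : L.TotDisc) (I1 I2 I3 : GoodInt)
    (h1 : I1 ∈ L.mem) (h2 : I2 ∈ L.mem) (h3 : I3 ∈ L.mem)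
    (d12 : ¬ SameLeaf I1 I2) (d13 : ¬ SameLeaf I1 I3) (d23 : ¬ SameLeaf I2 I3) :
    I1.verts ∩ I2.verts ∩ I3.verts = ∅ := by
  rw [Set.eq_empty_iff_forall_notMem]
  rintro x ⟨⟨hx1, hx2⟩, hx3⟩
  obtain ⟨t1, J1, m1, r1, e1⟩ := exists_lam h1 hx1
  obtain ⟨t2, J2, m2, r2, e2⟩ := exists_lam h2 hx2
  obtain ⟨t3, J3, m3, r3, e3⟩ := exists_lam h3 hx3
  have same : ∀ {I I' J J' : GoodInt} {t t' : ℝ}, Rep x 0 t J → Rep x 0 t' J' →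
      (I = J ∨ I = J.dual) → (I' = J' ∨ I' = J'.dual) → ¬ SameLeaf I I' → t ≠ t' := by
    intro I I' J J' t t' r r' e e' d h
    subst h
    obtain rfl := r.ext r'
    apply d
    rcases e with rfl | rfl <;> rcases e' with rfl | rfl
    exacts [Or.inl rfl, Or.inr rfl, Or.inr rfl, Or.inl rfl]
  have n12 := same r1 r2 e1 e2 d12
  have n13 := same r1 r3 e1 e3 d13
  have n23 := same r2 r3 e2 e3 d23
  have l1 : Lam L x 0 t1 := ⟨J1, m1, r1⟩
  have l2 : Lam L x 0 t2 := ⟨J2, m2, r2⟩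
  have l3 : Lam L x 0 t3 := ⟨J3, m3, r3⟩
  rcases lt_or_gt_of_ne n12 with a | a <;> rcases lt_or_gt_of_ne n13 with b | b <;>
    rcases lt_or_gt_of_ne n23 with c | c
  · exact no_three hl htd l1 l2 l3 a c
  · exact no_three hl htd l1 l3 l2 b c
  · linarith
  · exact no_three hl htd l3 l1 l2 b a
  · exact no_three hl htd l2 l1 l3 a b
  · linarith
  · exact no_three hl htd l2 l3 l1 c b
  · exact no_three hl htd l3 l2 l1 c a

end Veering
end

section
/- Let 𝓛 be a quite full lamination system that is loose and totally disconnected. Then every leaf of 𝓛 is either a real leaf or a boundary leaf of a non-leaf gap; in particular, no leaf of 𝓛 is isolated. Moreover, every non-leaf gap of 𝓛 is real. -/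
/-!
Isolation of a leaf forces a non-leaf gap next to it. Suppose `I ∈ 𝓛` admits no `I`-side sequence.
Elements of `𝓛` properly contained in `I` and containing a fixed one are totally ordered by
inclusion, and an ascending sequence among them whose lengths tend to the supremum has as its union
a good interval. That union is in `𝓛` by closedness, and it is not `I`, since otherwise the
sequence would be an `I`-side sequence. So every element of `𝓛` properly inside `I` lies in a
maximal one (`exists_maximal`). These maximal elements together with `I*` form a non-leaf gap
containing `I*` but not `I` (`exists_gap`).

If now a non-leaf gap `𝒢` contained an isolated `I`, this construction would give a second non-leaf
gap containing `I*`. Both gaps have the endpoints of `I` as vertices, which contradicts looseness.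
This shows that non-leaf gaps are real. If `I` is isolated, then `I*` is in a non-leaf gap and hence
not isolated, so no leaf is isolated, and a leaf that is not real bounds a non-leaf gap.

Questions about the circular order are reduced to inequalities between real numbers by a coordinate
on the circle with values in `[0, 1)` and a prescribed origin (`exists_coord`).
-/

open Set Filter Topology

namespace Veering

/-! ### A coordinate on the circle -/

/-- A coordinate on the circle with origin `o`: a bijection onto `[0, 1)` under which the strict
circular order is the cyclic order of real numbers. -/
structure IsCoord (o : S1) (e : S1 → ℝ) : Prop where
  zero : e o = 0
  nonneg : ∀ x, 0 ≤ e x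
  lt_one : ∀ x, e x < 1
  inj : ∀ x y, e x = e y → x = y
  surj : ∀ t : ℝ, 0 ≤ t → t < 1 → ∃ x, e x = t
  sbtw_iff : ∀ x y z, sbtw x y z ↔
    (e x < e y ∧ e y < e z) ∨ (e y < e z ∧ e z < e x) ∨ (e z < e x ∧ e x < e y)

theorem sbtw_coe_iff (o s t u : ℝ) (hs : 0 ≤ s) (hs1 : s < 1) (ht : 0 ≤ t) (ht1 : t < 1)
    (hu : 0 ≤ u) (hu1 : u < 1) :
    sbtw ((o + s : ℝ) : S1) ((o + t : ℝ) : S1) ((o + u : ℝ) : S1) ↔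
      (s < t ∧ t < u) ∨ (t < u ∧ u < s) ∨ (u < s ∧ s < t) := by
  have hp : (0 : ℝ) < 1 := one_pos
  rw [sbtw_iff_not_btw]
  have key : btw ((o + u : ℝ) : S1) ((o + t : ℝ) : S1) ((o + s : ℝ) : S1) ↔
      toIcoMod hp (o + u) (o + t) ≤ toIocMod hp (o + u) (o + s) :=
    QuotientAddGroup.btw_coe_iff
  rw [key, not_le]
  have h1 : toIcoMod hp (o + u) (o + t) = if u ≤ t then o + t else o + t + 1 := by
    rw [toIcoMod_eq_iff]
    split_ifs with h
    · exact ⟨⟨by linarith, by linarith⟩, 0, by simp⟩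
    · exact ⟨⟨by linarith, by linarith⟩, -1, by simp⟩
  have h2 : toIocMod hp (o + u) (o + s) = if u < s then o + s else o + s + 1 := by
    rw [toIocMod_eq_iff]
    split_ifs with h
    · exact ⟨⟨by linarith, by linarith⟩, 0, by simp⟩
    · exact ⟨⟨by linarith, by linarith⟩, -1, by simp⟩
  rw [h1, h2]
  split_ifs <;> grind

theorem exists_coord (o : S1) : ∃ e : S1 → ℝ, IsCoord o e := by
  obtain ⟨r, rfl⟩ := QuotientAddGroup.mk_surjective o
  have hp : (0 : ℝ) < 1 := one_pos
  have hex : ∀ x : S1, ∃ t : ℝ, (0 ≤ t ∧ t < 1) ∧ ((r + t : ℝ) : S1) = x := by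
    intro x
    obtain ⟨s, rfl⟩ := QuotientAddGroup.mk_surjective x
    have hm := toIcoMod_mem_Ico hp r s
    refine ⟨toIcoMod hp r s - r, ⟨by linarith [hm.1], by linarith [hm.2]⟩, ?_⟩
    rw [add_sub_cancel]
    rw [toIcoMod, AddCircle.coe_sub, AddCircle.coe_zsmul, AddCircle.coe_period, smul_zero, sub_zero]
  choose e he hxe using hex
  have huniq : ∀ (x : S1) (t : ℝ), 0 ≤ t → t < 1 → ((r + t : ℝ) : S1) = x → e x = t := by
    intro x t h0 h1 h
    rw [← hxe x] at h
    have hx := he x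
    have := (AddCircle.coe_eq_coe_iff_of_mem_Ico (p := (1 : ℝ)) (a := r)
      (x := r + t) (y := r + e x) ⟨by linarith, by linarith⟩
      ⟨by linarith, by linarith⟩).1 h
    linarith
  refine ⟨e, ⟨huniq _ 0 le_rfl hp (by rw [add_zero]), fun x => (he x).1, fun x => (he x).2,
    fun x y h => by rw [← hxe x, ← hxe y, h], fun t h0 h1 => ⟨_, huniq _ t h0 h1 rfl⟩, ?_⟩⟩
  intro x y z
  have := sbtw_coe_iff r (e x) (e y) (e z) (he x).1 (he x).2 (he y).1 (he y).2 (he z).1 (he z).2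
  rwa [hxe, hxe, hxe] at this

namespace IsCoord

variable {o : S1} {e : S1 → ℝ}

theorem mem_carrier (he : IsCoord o e) (J : GoodInt) (z : S1) : z ∈ J.carrier ↔
    (e J.a < e z ∧ e z < e J.b) ∨ (e z < e J.b ∧ e J.b < e J.a) ∨
      (e J.b < e J.a ∧ e J.a < e z) :=
  he.sbtw_iff _ _ _

theorem ne_ends (he : IsCoord o e) (J : GoodInt) : e J.a ≠ e J.b :=
  fun h => J.ne (he.inj _ _ h)

/-- A good interval inside `I` does not pass through the origin `I.a` of the coordinate, so it is
an honest interval of real numbers. -/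
theorem ends_of_subset {I J : GoodInt} (he : IsCoord I.a e) (h : J.carrier ⊆ I.carrier) :
    e J.a < e J.b ∧ e J.b ≤ e I.b := by
  have hI := he.ne_ends I
  have hJ := he.ne_ends J
  have h0 := he.zero
  have hIb := he.nonneg I.b
  have hlt : e J.a < e J.b := by
    by_contra! hle
    obtain ⟨t, ht1, ht2⟩ := exists_between (max_lt (he.lt_one J.a) (he.lt_one I.b))
    rw [max_lt_iff] at ht1
    obtain ⟨x, rfl⟩ := he.surj t (by linarith [he.nonneg J.a]) ht2
    have hx := h ((he.mem_carrier J x).2 (by grind))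
    rw [he.mem_carrier] at hx
    grind
  refine ⟨hlt, ?_⟩
  by_contra! hgt
  obtain ⟨t, ht1, ht2⟩ := exists_between (max_lt hlt hgt)
  rw [max_lt_iff] at ht1
  obtain ⟨x, rfl⟩ := he.surj t (by linarith [he.nonneg J.a]) (by linarith [he.lt_one J.b])
  have hx := h ((he.mem_carrier J x).2 (by grind))
  rw [he.mem_carrier] at hx
  grind

theorem mem_iff_of_lt (he : IsCoord o e) {J : GoodInt} (h : e J.a < e J.b) (z : S1) :
    z ∈ J.carrier ↔ e J.a < e z ∧ e z < e J.b := by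
  rw [he.mem_carrier]
  grind

theorem mem_dual_iff_of_lt (he : IsCoord o e) {J : GoodInt} (h : e J.a < e J.b) (z : S1) :
    z ∈ J.dual.carrier ↔ e z < e J.a ∨ e J.b < e z := by
  rw [he.mem_carrier]
  simp only [GoodInt.dual]
  grind

theorem subset_iff_of_lt (he : IsCoord o e) {J K : GoodInt} (hJ : e J.a < e J.b)
    (hK : e K.a < e K.b) : J.carrier ⊆ K.carrier ↔ e K.a ≤ e J.a ∧ e J.b ≤ e K.b := by
  constructor
  · intro h
    rw [← Set.Ioo_subset_Ioo_iff hJ]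
    rintro t ⟨h1, h2⟩
    obtain ⟨x, rfl⟩ := he.surj t (by linarith [he.nonneg J.a]) (by linarith [he.lt_one J.b])
    exact (he.mem_iff_of_lt hK x).1 (h ((he.mem_iff_of_lt hJ x).2 ⟨h1, h2⟩))
  · rintro ⟨h1, h2⟩ x hx
    rw [he.mem_iff_of_lt hJ] at hx
    rw [he.mem_iff_of_lt hK]
    exact ⟨by linarith, by linarith⟩

end IsCoord

/-! ### Good intervals inside a good interval -/

namespace GoodInt

theorem ext_ends {I J : GoodInt} (ha : I.a = J.a) (hb : I.b = J.b) : I = J := by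
  cases I; cases J; simp_all

theorem dual_dual_s6 (I : GoodInt) : I.dual.dual = I := rfl

theorem dual_ne (I : GoodInt) : I.dual ≠ I := fun h => I.ne (congrArg GoodInt.b h)

theorem carrier_injective {I J : GoodInt} (h : I.carrier = J.carrier) : I = J := by
  obtain ⟨e, he⟩ := exists_coord I.a
  have hI := (he.ends_of_subset (Subset.refl I.carrier)).1
  have hJ := (he.ends_of_subset h.symm.subset).1
  have h1 := (he.subset_iff_of_lt hI hJ).1 h.subset
  have h2 := (he.subset_iff_of_lt hJ hI).1 h.symm.subset
  exact ext_ends (he.inj _ _ (le_antisymm h2.1 h1.1)) (he.inj _ _ (le_antisymm h1.2 h2.2))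

theorem disjoint_dual (I : GoodInt) : Disjoint I.carrier I.dual.carrier := by
  obtain ⟨e, he⟩ := exists_coord I.a
  have hI := (he.ends_of_subset (Subset.refl I.carrier)).1
  rw [Set.disjoint_left]
  intro x h1 h2
  rw [he.mem_iff_of_lt hI] at h1
  rw [he.mem_dual_iff_of_lt hI] at h2
  grind

theorem carrier_nonempty (I : GoodInt) : I.carrier.Nonempty := by
  obtain ⟨e, he⟩ := exists_coord I.a
  have hI := (he.ends_of_subset (Subset.refl I.carrier)).1
  obtain ⟨t, h1, h2⟩ := exists_between hI
  obtain ⟨x, rfl⟩ := he.surj t (by linarith [he.nonneg I.a]) (by linarith [he.lt_one I.b])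
  exact ⟨x, (he.mem_iff_of_lt hI x).2 ⟨h1, h2⟩⟩

theorem not_dual_subset {I J : GoodInt} (h : J.carrier ⊆ I.carrier) :
    ¬ J.dual.carrier ⊆ I.carrier := by
  intro h'
  obtain ⟨e, he⟩ := exists_coord I.a
  exact lt_asymm (he.ends_of_subset h).1 (he.ends_of_subset h').1

theorem dual_subset_dual {J K : GoodInt} (h : J.dual.carrier ⊆ K.dual.carrier) :
    K.carrier ⊆ J.carrier := by
  obtain ⟨e, he⟩ := exists_coord K.a
  have hK := (he.ends_of_subset (Subset.refl K.carrier)).1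
  have hx : ∀ x, x ∈ J.dual.carrier → e K.b < e x := by
    intro x hx
    have h1 := (he.mem_dual_iff_of_lt hK x).1 (h hx)
    have h2 := he.nonneg x
    have h3 := he.zero
    grind
  intro x hxK
  rw [he.mem_iff_of_lt hK] at hxK
  by_contra hxJ
  have hJ := he.ne_ends J
  have h0 := he.zero
  -- Just to one side of `x` there would be a point of `K` belonging to `J*`.
  by_cases hside : e J.b < e x ∧ e x ≤ e J.a ∨ e J.a < e J.b ∧ (e x ≤ e J.a ∨ e J.b < e x)
  · obtain ⟨t, ht1, ht2⟩ : ∃ t, (max (e K.a) (if e J.b < e x then e J.b else e K.a)) < t ∧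
        t < e x := exists_between (by split_ifs <;> simp_all)
    rw [max_lt_iff] at ht1
    obtain ⟨y, rfl⟩ := he.surj t (by linarith) (by linarith [he.lt_one x])
    have := hx y ((he.mem_carrier J.dual y).2 (by simp only [dual]; grind))
    linarith
  · obtain ⟨t, ht1, ht2⟩ : ∃ t, e x < t ∧
        t < min (e K.b) (if e x < e J.a then e J.a else e K.b) :=
      exists_between (by split_ifs <;> simp_all)
    rw [lt_min_iff] at ht2
    obtain ⟨y, rfl⟩ := he.surj t (by linarith [he.nonneg x]) (by linarith [he.lt_one K.b])
    rw [he.mem_carrier] at hxJ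
    have := hx y ((he.mem_carrier J.dual y).2 (by simp only [dual]; grind))
    linarith

theorem ends_notMem_of_disjoint {I J : GoodInt} (h : Disjoint J.carrier I.carrier) :
    I.a ∉ J.carrier ∧ I.b ∉ J.carrier := by
  obtain ⟨e, he⟩ := exists_coord I.a
  have hI := (he.ends_of_subset (Subset.refl I.carrier)).1
  have h0 := he.zero
  have hJa := he.nonneg J.a
  have hJb := he.nonneg J.b
  rw [Set.disjoint_left] at h
  have hno : ∀ t, e I.a < t → t < e I.b →
      ¬ ((e J.a < t ∧ t < e J.b) ∨ (t < e J.b ∧ e J.b < e J.a) ∨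
        (e J.b < e J.a ∧ e J.a < t)) := by
    intro t h1 h2 h3
    obtain ⟨x, rfl⟩ := he.surj t (by linarith) (by linarith [he.lt_one I.b])
    exact h ((he.mem_carrier J x).2 h3) ((he.mem_iff_of_lt hI x).2 ⟨h1, h2⟩)
  constructor
  · intro hm
    rw [he.mem_carrier] at hm
    obtain ⟨t, ht1, ht2⟩ := exists_between
      (show e I.a < min (e I.b) (e J.b) by rw [lt_min_iff]; grind)
    rw [lt_min_iff] at ht2
    exact hno t ht1 ht2.1 (by grind)
  · intro hm
    rw [he.mem_carrier] at hm
    obtain ⟨t, ht1, ht2⟩ := exists_between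
      (show max (e I.a) (if e J.a < e I.b then e J.a else e I.a) < e I.b by split_ifs <;> simp_all)
    rw [max_lt_iff] at ht1
    exact hno t ht1.1 ht2 (by grind)

end GoodInt

/-! ### The gap next to an isolated interval -/

namespace LamSys

variable {L : LamSys}

theorem nested_or_disjoint {I J K : GoodInt} (hJ : J ∈ L.mem) (hK : K ∈ L.mem)
    (hJI : J.carrier ⊆ I.carrier) (hKI : K.carrier ⊆ I.carrier) :
    J.carrier ⊆ K.carrier ∨ K.carrier ⊆ J.carrier ∨ Disjoint J.carrier K.carrier := by
  rcases L.unlinked J hJ K hK with h | h | h | h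
  · exact Or.inl h
  · exact (GoodInt.not_dual_subset hJI (h.trans hKI)).elim
  · exact Or.inr (Or.inr (K.disjoint_dual.symm.mono_left h))
  · exact Or.inr (Or.inl (GoodInt.dual_subset_dual h))

theorem hasSideSeq_of_monotone {I : GoodInt} (c : ℕ → GoodInt) (hc : ∀ n, c n ∈ L.mem)
    (hmono : Monotone fun n => (c n).carrier) (hlt : ∀ n, (c n).carrier ⊂ I.carrier)
    (hU : I.carrier = ⋃ n, (c n).carrier) : L.HasSideSeq I := by
  refine ⟨c, hc, ?_, fun n => Or.inl (hlt n).subset, c, fun n => Or.inl rfl, ?_, ?_⟩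
  · rintro n (h | h)
    · exact (hlt n).ne (congrArg GoodInt.carrier h)
    · have hs := (hlt n).subset
      rw [h] at hs
      exact GoodInt.not_dual_subset (Subset.refl I.carrier) hs
  · intro x hx
    rw [hU, mem_iUnion] at hx
    obtain ⟨n, hn⟩ := hx
    rw [mem_liminf_iff_eventually_mem]
    filter_upwards [eventually_ge_atTop n] with m hm using hmono hm hn
  · intro x hx
    rw [mem_limsup_iff_frequently_mem] at hx
    obtain ⟨n, hn⟩ := hx.exists
    exact subset_closure ((hlt n).subset hn)

/-- If `I` is isolated, then every element of `L` properly inside `I` lies in a maximal one. -/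
theorem exists_maximal {I J₀ : GoodInt} (hI : ¬ L.HasSideSeq I) (hJ₀ : J₀ ∈ L.mem)
    (hJ₀I : J₀.carrier ⊂ I.carrier) :
    ∃ M ∈ L.mem, M.carrier ⊂ I.carrier ∧ J₀.carrier ⊆ M.carrier ∧
      ∀ N ∈ L.mem, N.carrier ⊂ I.carrier → M.carrier ⊆ N.carrier → N = M := by
  obtain ⟨e, he⟩ := exists_coord I.a
  set F : Set GoodInt :=
    {J | J ∈ L.mem ∧ J.carrier ⊂ I.carrier ∧ J₀.carrier ⊆ J.carrier} with hF
  have hends : ∀ J ∈ F, e J.a < e J.b := fun J hJ => (he.ends_of_subset hJ.2.1.subset).1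
  have htot : ∀ J ∈ F, ∀ K ∈ F, J.carrier ⊆ K.carrier ∨ K.carrier ⊆ J.carrier := by
    intro J hJ K hK
    rcases nested_or_disjoint hJ.1 hK.1 hJ.2.1.subset hK.2.1.subset with h | h | h
    · exact Or.inl h
    · exact Or.inr h
    · obtain ⟨x, hx⟩ := J₀.carrier_nonempty
      exact (Set.disjoint_left.1 h (hJ.2.2 hx) (hK.2.2 hx)).elim
  -- Among the totally ordered elements of `F`, inclusion is decided by length.
  have hlen : ∀ J ∈ F, ∀ K ∈ F, e J.b - e J.a ≤ e K.b - e K.a → J.carrier ⊆ K.carrier := by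
    intro J hJ K hK h
    rcases htot J hJ K hK with h1 | h1
    · exact h1
    · have h2 := (he.subset_iff_of_lt (hends K hK) (hends J hJ)).1 h1
      exact (he.subset_iff_of_lt (hends J hJ) (hends K hK)).2 ⟨by linarith, by linarith⟩
  set S : Set ℝ := (fun J : GoodInt => e J.b - e J.a) '' F with hS
  have hbdd : BddAbove S := by
    refine ⟨1, ?_⟩
    rintro _ ⟨J, -, rfl⟩
    have h1 := he.lt_one J.b
    have h2 := he.nonneg J.a
    simp only
    linarith
  obtain ⟨u, humono, hulim, huS⟩ :=
    exists_seq_tendsto_sSup (S := S) ⟨_, J₀, ⟨hJ₀, hJ₀I, Subset.refl _⟩, rfl⟩ hbdd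
  choose c hcF hcu using huS
  simp only at hcu
  have hcmono : Monotone fun n => (c n).carrier := by
    intro m n hmn
    refine hlen _ (hcF m) _ (hcF n) ?_
    rw [hcu, hcu]
    exact humono hmn
  have hcends : ∀ m n, m ≤ n → e (c n).a ≤ e (c m).a ∧ e (c m).b ≤ e (c n).b := fun m n hmn =>
    (he.subset_iff_of_lt (hends _ (hcF m)) (hends _ (hcF n))).1 (hcmono hmn)
  have hbA : BddBelow (range fun n => e (c n).a) := ⟨0, by rintro _ ⟨n, rfl⟩; exact he.nonneg _⟩
  have hbB : BddAbove (range fun n => e (c n).b) :=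
    ⟨e I.b, by rintro _ ⟨n, rfl⟩; exact (he.ends_of_subset (hcF n).2.1.subset).2⟩
  have hA : ∀ n, (⨅ n, e (c n).a) ≤ e (c n).a := fun n => ciInf_le hbA n
  have hB : ∀ n, e (c n).b ≤ ⨆ n, e (c n).b := fun n => le_ciSup hbB n
  have hA0 : 0 ≤ ⨅ n, e (c n).a := le_ciInf fun n => he.nonneg _
  have hBI : (⨆ n, e (c n).b) ≤ e I.b :=
    ciSup_le fun n => (he.ends_of_subset (hcF n).2.1.subset).2
  have hAB : (⨅ n, e (c n).a) < ⨆ n, e (c n).b :=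
    (hA 0).trans_lt ((hends _ (hcF 0)).trans_le (hB 0))
  have hI1 := he.lt_one I.b
  obtain ⟨p, hp⟩ := he.surj _ hA0 (by linarith)
  obtain ⟨q, hq⟩ := he.surj _ (hA0.trans hAB.le) (by linarith)
  have hpq : p ≠ q := by
    rintro rfl
    exact hAB.ne (hp.symm.trans hq)
  set M : GoodInt := ⟨p, q, hpq⟩ with hM
  have hMends : e M.a < e M.b := by simp only [hM]; rw [hp, hq]; exact hAB
  have hMU : M.carrier = ⋃ n, (c n).carrier := by
    ext x
    rw [he.mem_iff_of_lt hMends, mem_iUnion]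
    simp only [hM]
    rw [hp, hq]
    constructor
    · rintro ⟨h1, h2⟩
      obtain ⟨m, hm⟩ := exists_lt_of_ciInf_lt h1
      obtain ⟨n, hn⟩ := exists_lt_of_lt_ciSup h2
      refine ⟨max m n, (he.mem_iff_of_lt (hends _ (hcF _)) x).2 ⟨?_, ?_⟩⟩
      · exact (hcends m _ (le_max_left m n)).1.trans_lt hm
      · exact hn.trans_le (hcends n _ (le_max_right m n)).2
    · rintro ⟨n, hn⟩
      rw [he.mem_iff_of_lt (hends _ (hcF n))] at hn
      exact ⟨(hA n).trans_lt hn.1, hn.2.trans_le (hB n)⟩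
  have hcM : ∀ n, (c n).carrier ⊆ M.carrier := fun n => by
    rw [hMU]; exact subset_iUnion (fun n => (c n).carrier) n
  have hMmem : M ∈ L.mem :=
    L.chain_closed c (fun n => (hcF n).1) (fun n => hcmono n.le_succ) M hMU
  have hMI : M.carrier ⊂ I.carrier := by
    refine ⟨?_, fun h => hI ?_⟩
    · rw [hMU]
      exact iUnion_subset fun n => (hcF n).2.1.subset
    · refine hasSideSeq_of_monotone c (fun n => (hcF n).1) hcmono (fun n => (hcF n).2.1) ?_
      rw [← hMU]
      refine Subset.antisymm h ?_
      rw [hMU]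
      exact iUnion_subset fun n => (hcF n).2.1.subset
  have hJ₀M : J₀.carrier ⊆ M.carrier := (hcF 0).2.2.trans (hcM 0)
  refine ⟨M, hMmem, hMI, hJ₀M, fun N hN hNI hMN => ?_⟩
  have hMF : M ∈ F := ⟨hMmem, hMI, hJ₀M⟩
  have hNF : N ∈ F := ⟨hN, hNI, hJ₀M.trans hMN⟩
  have hNle : e N.b - e N.a ≤ e M.b - e M.a := by
    refine (le_csSup hbdd ⟨N, hNF, rfl⟩).trans (le_of_tendsto' hulim fun n => ?_)
    have := (he.subset_iff_of_lt (hends _ (hcF n)) hMends).1 (hcM n)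
    rw [← hcu]
    linarith
  exact GoodInt.carrier_injective (Subset.antisymm (hlen N hNF M hMF hNle) hMN)

/-- If `I` is isolated, then `I*` and the maximal elements properly inside `I` form a non-leaf
gap. -/
theorem exists_gap {I : GoodInt} (hIL : I ∈ L.mem) (hI : ¬ L.HasSideSeq I) :
    ∃ G : Set GoodInt, L.IsGap G ∧ ¬ IsLeafGap G ∧ I.dual ∈ G ∧ I ∉ G := by
  set X : Set GoodInt := {M | M ∈ L.mem ∧ M.carrier ⊂ I.carrier ∧
    ∀ N ∈ L.mem, N.carrier ⊂ I.carrier → M.carrier ⊆ N.carrier → N = M} with hX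
  have hIG : I ∉ insert I.dual X := by
    rintro (h | h)
    · exact I.dual_ne h.symm
    · exact h.2.1.ne rfl
  have hdisj : ∀ M ∈ X, Disjoint I.dual.carrier M.carrier := fun M hM =>
    I.disjoint_dual.symm.mono_right hM.2.1.subset
  -- A leaf with a side inside `I` lies on `I*` if it is the leaf of `I`, otherwise on a maximal
  -- element.
  have hcover : ∀ K ∈ L.mem, K.carrier ⊆ I.carrier → K = I ∨ ∃ M ∈ X, K.carrier ⊆ M.carrier := by
    intro K hK hKI
    by_cases h : I.carrier ⊆ K.carrier
    · exact Or.inl (GoodInt.carrier_injective (Subset.antisymm hKI h))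
    · obtain ⟨M, hM, hMI, hKM, hmax⟩ := exists_maximal hI hK ⟨hKI, h⟩
      exact Or.inr ⟨M, ⟨hM, hMI, hmax⟩, hKM⟩
  refine ⟨insert I.dual X, ⟨?_, ?_, ?_⟩, ?_, mem_insert _ _, hIG⟩
  · rintro J (rfl | hJ)
    · exact L.dual_mem I hIL
    · exact hJ.1
  · rintro J (rfl | hJ) K (rfl | hK) hne
    · exact (hne rfl).elim
    · exact hdisj K hK
    · exact (hdisj J hJ).symm
    · rcases nested_or_disjoint hJ.1 hK.1 hJ.2.1.subset hK.2.1.subset with h | h | h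
      · exact (hne (hJ.2.2 K hK.1 hK.2.1 h).symm).elim
      · exact (hne (hK.2.2 J hJ.1 hJ.2.1 h)).elim
      · exact h
  · intro J hJ
    rcases L.unlinked J hJ I hIL with h | h | h | h
    · rcases hcover J hJ h with rfl | ⟨M, hM, hJM⟩
      · exact ⟨_, mem_insert _ _, Or.inr (Subset.refl _)⟩
      · exact ⟨M, mem_insert_of_mem _ hM, Or.inl hJM⟩
    · rcases hcover J.dual (L.dual_mem J hJ) h with h' | ⟨M, hM, hJM⟩
      · refine ⟨_, mem_insert _ _, Or.inl ?_⟩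
        rw [← h', GoodInt.dual_dual_s6]
      · exact ⟨M, mem_insert_of_mem _ hM, Or.inr hJM⟩
    · exact ⟨_, mem_insert _ _, Or.inl h⟩
    · exact ⟨_, mem_insert _ _, Or.inr h⟩
  · rintro ⟨K, hK⟩
    have h : I.dual ∈ ({K, K.dual} : Set GoodInt) := hK ▸ mem_insert _ _
    rw [hK] at hIG
    rcases h with h | h
    · exact hIG (Or.inr (by rw [mem_singleton_iff, ← h, GoodInt.dual_dual_s6]))
    · exact hIG (Or.inl (congrArg GoodInt.dual h))

theorem IsGap.ends_mem {G : Set GoodInt} (hG : L.IsGap G) {I : GoodInt} (hI : I ∈ G) :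
    I.a ∈ gapVerts G ∧ I.b ∈ gapVerts G := by
  have h : ∀ J ∈ G, I.a ∉ J.carrier ∧ I.b ∉ J.carrier := by
    intro J hJ
    by_cases hJI : J = I
    · subst hJI
      -- `J` is disjoint from `J*`, which has the same endpoints.
      exact (GoodInt.ends_notMem_of_disjoint J.disjoint_dual).symm
    · exact GoodInt.ends_notMem_of_disjoint (hG.2.1 J hJ I hI hJI)
  simp only [gapVerts, mem_compl_iff, mem_iUnion, not_exists]
  exact ⟨fun J hJ => (h J hJ).1, fun J hJ => (h J hJ).2⟩

/-- In a loose lamination system every non-leaf gap is real. -/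
theorem hasSideSeq_of_mem_gap (hl : L.Loose) {G : Set GoodInt} (hG : L.IsGap G)
    (hGl : ¬ IsLeafGap G) {I : GoodInt} (hI : I ∈ G) : L.HasSideSeq I := by
  by_contra hno
  obtain ⟨H, hH, hHl, hdual, hnot⟩ := exists_gap (hG.1 hI) hno
  have hne : G ≠ H := fun h => hnot (h ▸ hI)
  exact Set.disjoint_left.1 (hl G H hG hH hGl hHl hne) (hG.ends_mem hI).2 (hH.ends_mem hdual).1

end LamSys

/-- in a quite full, loose, totally disconnected lamination
system, every leaf is real or a boundary leaf of a non-leaf gap; no leaf is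
isolated; and every non-leaf gap is real. -/
theorem statement6 (L : LamSys) (hqf : L.QuiteFull) (hl : L.Loose)
    (htd : L.TotDisc) :
    (∀ I ∈ L.mem, (L.HasSideSeq I ∧ L.HasSideSeq I.dual) ∨
        ∃ G : Set GoodInt, L.IsGap G ∧ ¬ IsLeafGap G ∧ (I ∈ G ∨ I.dual ∈ G)) ∧
    (∀ I ∈ L.mem, ¬ (¬ L.HasSideSeq I ∧ ¬ L.HasSideSeq I.dual)) ∧
    (∀ G : Set GoodInt, L.IsGap G → ¬ IsLeafGap G → ∀ I ∈ G, L.HasSideSeq I) := by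
  refine ⟨fun I hI => ?_, fun I hI ⟨h1, h2⟩ => ?_,
    fun G hG hGl I hI => LamSys.hasSideSeq_of_mem_gap hl hG hGl hI⟩
  · by_cases h1 : L.HasSideSeq I
    · by_cases h2 : L.HasSideSeq I.dual
      · exact Or.inl ⟨h1, h2⟩
      · obtain ⟨G, hG, hGl, hm, -⟩ := LamSys.exists_gap (L.dual_mem I hI) h2
        exact Or.inr ⟨G, hG, hGl, Or.inl hm⟩
    · obtain ⟨G, hG, hGl, hm, -⟩ := LamSys.exists_gap hI h1
      exact Or.inr ⟨G, hG, hGl, Or.inr hm⟩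
  · obtain ⟨G, hG, hGl, hm, -⟩ := LamSys.exists_gap hI h1
    exact h2 (LamSys.hasSideSeq_of_mem_gap hl hG hGl hm)

end Veering
end
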